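/- Let N ≥ 1 and let U₁,…,U_N be bounded linear operators on a complex Hilbert space Y such that for every ζ ∈ ℂ^N with |ζ₁| = … = |ζ_N| = 1 the operator ζ₁U₁ + … + ζ_N U_N is unitary. Then Σ_{k=1}^N U_k U_k* = I_Y and Σ_{k=1}^N U_k* U_k = I_Y, and for all j ≠ k one has U_j U_k* = 0 and U_j* U_k = 0. -/

import Mathlib

open ContinuousLinearMap

noncomputable section

/-- A continuous linear operator on a complex Hilbert space is unitary. -/
def IsUnitaryOp {Y : Type*} [NormedAddCommGroup Y] [InnerProductSpace ℂ Y] [CompleteSpace Y]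
    (T : Y →L[ℂ] Y) : Prop :=
  T ∘L adjoint T = 1 ∧ adjoint T ∘L T = 1

theorem pencil_aux {N : ℕ} {A : Type*} [AddCommGroup A] [Module ℂ A]
    (M : Fin N → Fin N → A) (c : A)
    (h : ∀ ζ : Fin N → ℂ, (∀ k, ‖ζ k‖ = 1) →
      ∑ p, ∑ q, (ζ p * (starRingEnd ℂ) (ζ q)) • M p q = c) :
    (∑ k, M k k) = c ∧ ∀ j k, j ≠ k → M j k = 0 := by
  have off : ∀ j k, j ≠ k → M j k = 0 := by
    intro j k hjk
    let z : ℂ → ℂ → Fin N → ℂ := fun a b p => if p = j then a else if p = k then b else 1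
    have hz : ∀ a b : ℂ, ‖a‖ = 1 → ‖b‖ = 1 →
        ∑ p, ∑ q, (z a b p * (starRingEnd ℂ) (z a b q)) • M p q = c := by
      intro a b ha hb
      apply h
      intro p
      simp only [z]
      split_ifs <;> simp [ha, hb]
    have key : ∀ a : ℂ, ‖a‖ = 1 →
        (4 * a) • M j k + (4 * (starRingEnd ℂ) a) • M k j = 0 := by
      intro a ha
      have e1 := hz a 1 ha (by simp)
      have e2 := hz (-a) 1 (by simpa using ha) (by simp)
      have e3 := hz a (-1) ha (by simp)
      have e4 := hz (-a) (-1) (by simpa using ha) (by simp)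
      have e : ∑ p, ∑ q, ((z a 1 p * (starRingEnd ℂ) (z a 1 q))
          - (z (-a) 1 p * (starRingEnd ℂ) (z (-a) 1 q))
          - (z a (-1) p * (starRingEnd ℂ) (z a (-1) q))
          + (z (-a) (-1) p * (starRingEnd ℂ) (z (-a) (-1) q))) • M p q = 0 := by
        simp only [add_smul, sub_smul, Finset.sum_add_distrib, Finset.sum_sub_distrib,
          e1, e2, e3, e4]
        abel
      have e' : ∑ p, ∑ q, ((if p = j then (if q = k then (4 * a) • M p q else 0) else 0)
          + (if p = k then (if q = j then (4 * (starRingEnd ℂ) a) • M p q else 0) else 0)) = 0 := by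
        refine Eq.trans ?_ e
        refine Finset.sum_congr rfl fun p _ => Finset.sum_congr rfl fun q _ => ?_
        have hkj := hjk.symm
        by_cases h1 : p = j <;> by_cases h2 : p = k <;> by_cases h3 : q = j <;>
          by_cases h4 : q = k <;>
          first
          | (exfalso; subst_vars; contradiction)
          | (simp only [z, h1, h2, h3, h4, hjk, hkj, if_true, if_false, add_zero, zero_add,
              map_neg, map_one]
             module)
      simpa [Finset.sum_add_distrib] using e'
    have k1 := key 1 (by simp)
    have k2 := key Complex.I (by simp)
    have k3 : (8 : ℂ) • M j k = 0 := by
      have : (8 : ℂ) • M j k = ((4 * 1 : ℂ) • M j k + (4 * (starRingEnd ℂ) 1 : ℂ) • M k j)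
          + (-Complex.I) • ((4 * Complex.I) • M j k
            + (4 * (starRingEnd ℂ) Complex.I) • M k j) := by
        simp only [map_one, Complex.conj_I]
        match_scalars <;> ring_nf <;> simp <;> norm_num
      rw [this, k1, k2]; simp
    exact (smul_eq_zero.mp k3).resolve_left (by norm_num)
  refine ⟨?_, off⟩
  rw [← h 1 (by simp)]
  refine Finset.sum_congr rfl fun p _ => ?_
  rw [Finset.sum_eq_single p]
  · simp
  · intro q _ hq
    rw [off p q hq.symm, smul_zero]
  · simp

/-- if `ζ₁U₁ + ⋯ + ζ_N U_N` is unitary for every unimodular `ζ ∈ ℂ^N`, then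
`Σ U_k U_k* = I`, `Σ U_k* U_k = I`, and `U_j U_k* = 0`, `U_j* U_k = 0` for `j ≠ k`. -/
theorem unitary_pencil_structure (N : ℕ) (hN : 1 ≤ N)
    {Y : Type*} [NormedAddCommGroup Y] [InnerProductSpace ℂ Y] [CompleteSpace Y]
    (U : Fin N → Y →L[ℂ] Y)
    (hU : ∀ ζ : Fin N → ℂ, (∀ k, ‖ζ k‖ = 1) → IsUnitaryOp (∑ k, ζ k • U k)) :
    (∑ k, U k ∘L adjoint (U k)) = 1 ∧ (∑ k, adjoint (U k) ∘L U k) = 1 ∧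
      (∀ j k, j ≠ k → U j ∘L adjoint (U k) = 0) ∧
      (∀ j k, j ≠ k → adjoint (U j) ∘L U k = 0) := by
  obtain ⟨h1, h2⟩ := pencil_aux (fun j k => U j ∘L adjoint (U k)) 1 (by
    intro ζ hζ
    rw [← (hU ζ hζ).1]
    change _ = (∑ k, ζ k • U k) * star (∑ k, ζ k • U k)
    rw [star_sum, Finset.sum_mul_sum]
    refine Finset.sum_congr rfl fun p _ => Finset.sum_congr rfl fun q _ => ?_
    rw [star_smul, smul_mul_smul_comm]
    rfl)
  obtain ⟨h3, h4⟩ := pencil_aux (fun j k => adjoint (U j) ∘L U k) 1 (by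
    intro ζ hζ
    have hζ' : ∀ k, ‖(starRingEnd ℂ) (ζ k)‖ = 1 := by simpa using hζ
    rw [← (hU (fun k => (starRingEnd ℂ) (ζ k)) hζ').2]
    change _ = star (∑ k, (starRingEnd ℂ) (ζ k) • U k) * (∑ k, (starRingEnd ℂ) (ζ k) • U k)
    rw [star_sum, Finset.sum_mul_sum]
    refine Finset.sum_congr rfl fun p _ => Finset.sum_congr rfl fun q _ => ?_
    rw [star_smul, smul_mul_smul_comm, ← starRingEnd_apply, Complex.conj_conj]
    rfl)
  exact ⟨h1, h3, h2, h4⟩
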